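/- Let R be a regular domain with a generalized regular system of parameters x = x_1,…,x_p, and let g, h ∈ R. Then Γ_x(gh) = Γ_x(g) + Γ_x(h), where + denotes the Minkowski sum. -/

import Mathlib

open Ideal Set Pointwise

noncomputable section

namespace NND

variable {R : Type*} [CommRing R] {p : ℕ}

/-- The monomial `x^a = x 0 ^ a 0 * ⋯` in the elements `x`. -/
def mono (x : Fin p → R) (a : Fin p → ℕ) : R := ∏ i, x i ^ a i

/-- A (commutative) ring is regular local if it is Noetherian local and its maximal ideal
can be generated by `dim R` elements. -/
def IsRegularLocal (A : Type*) [CommRing A] : Prop :=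
  IsNoetherianRing A ∧ ∃ h : IsLocalRing A, ∃ s : Finset A,
    Ideal.span (s : Set A) = @IsLocalRing.maximalIdeal A _ h ∧
    (s.card : WithBot (WithTop ℕ)) = ringKrullDim A

/-- A regular domain: an integral domain whose localization at every prime is regular local. -/
def IsRegularDomain (A : Type*) [CommRing A] : Prop :=
  IsDomain A ∧ ∀ (P : Ideal A) (hP : P.IsPrime), IsRegularLocal (@Localization.AtPrime A _ P hP)

/-- `x` is a regular sequence. -/
def IsRegSeq (x : Fin p → R) : Prop :=
  Ideal.span (Set.range x) ≠ ⊤ ∧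
  ∀ i : Fin p, ∀ r : R, r * x i ∈ Ideal.span (x '' {j | j < i}) →
    r ∈ Ideal.span (x '' {j | j < i})

/-- A generalized regular system of parameters: a permutable regular sequence all of whose
subquotients are regular domains. -/
def IsGRSOP (x : Fin p → R) : Prop :=
  (∀ σ : Equiv.Perm (Fin p), IsRegSeq (x ∘ σ)) ∧
  ∀ S : Set (Fin p), IsRegularDomain (R ⧸ Ideal.span (x '' S))

/-- `A` is the exponent set of a monomial representation of `f`:
`h * f = ∑_{a ∈ A} r a * x^a` with `h` and the `r a` outside `(x_1, …, x_p)`. -/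
def IsMonRep (x : Fin p → R) (f : R) (A : Finset (Fin p → ℕ)) : Prop :=
  ∃ (h : R) (r : (Fin p → ℕ) → R),
    h ∉ Ideal.span (Set.range x) ∧ (∀ a ∈ A, r a ∉ Ideal.span (Set.range x)) ∧
    h * f = ∑ a ∈ A, r a * mono x a

/-- A minimal (irredundant) monomial representation: no monomial divides another. -/
def IsMinMonRep (x : Fin p → R) (f : R) (A : Finset (Fin p → ℕ)) : Prop :=
  IsMonRep x f A ∧ ∀ a ∈ A, ∀ b ∈ A, a ≠ b → ¬ mono x a ∣ mono x b

open Classical in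
/-- The support of `f`: the exponent set of its (unique) minimal monomial representation. -/
def supp (x : Fin p → R) (f : R) : Set (Fin p → ℕ) :=
  if h : ∃ A : Finset (Fin p → ℕ), IsMinMonRep x f A then ↑h.choose else ∅

/-- Embedding of exponent vectors into `ℝ^p`. -/
def toR (a : Fin p → ℕ) : Fin p → ℝ := fun i => (a i : ℝ)

/-- The Newton polyhedron of a set of ring elements. -/
def Γ (x : Fin p → R) (S : Set R) : Set (Fin p → ℝ) :=
  convexHull ℝ (toR '' ⋃ f ∈ S, supp x f)

/-- The Newton polyhedron `Γ_x(I)` of an ideal. -/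
def ΓI (x : Fin p → R) (I : Ideal R) : Set (Fin p → ℝ) := Γ x (I : Set R)

/-- The Newton polyhedron `Γ_x(f)` of an element: that of the principal ideal `(f)`. -/
def ΓE (x : Fin p → R) (f : R) : Set (Fin p → ℝ) := ΓI x (Ideal.span {f})

/-- The integral closure of an ideal `I`: elements satisfying an equation of integral
dependence `f^n + a_1 f^{n-1} + ⋯ + a_n = 0` with `a_i ∈ I^i`. -/
def intClosure (I : Ideal R) : Set R :=
  {f | ∃ n : ℕ, 0 < n ∧ ∃ a : ℕ → R, (∀ i ∈ Finset.Icc 1 n, a i ∈ I ^ i) ∧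
    f ^ n + ∑ i ∈ Finset.Icc 1 n, a i * f ^ (n - i) = 0}

/-- The monomial ideal `I_0` spanned by the lattice points of `Γ_x(I)`. -/
def idealZero (x : Fin p → R) (I : Ideal R) : Ideal R :=
  Ideal.span (mono x '' {a | toR a ∈ ΓI x I})

/-- The ideal `K_I` generated by the monomials lying in the integral closure of `I`. -/
def KIdeal (x : Fin p → R) (I : Ideal R) : Ideal R :=
  Ideal.span {m | (∃ a : Fin p → ℕ, m = mono x a) ∧ m ∈ intClosure I}

/-! ### Colon ideals of permutable regular sequences -/

/-- The ideal generated by the powers `x j ^ a j`, `j ∈ S`. -/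
def powI (x : Fin p → R) (S : Finset (Fin p)) (a : Fin p → ℕ) : Ideal R :=
  Ideal.span ((fun j => x j ^ a j) '' (S : Set (Fin p)))

lemma mem_powI_split (x : Fin p → R) (S : Finset (Fin p)) (a : Fin p → ℕ) (k : Fin p)
    (hk : k ∈ S) (z : R) :
    z ∈ powI x S a ↔ ∃ t, z - t * x k ^ a k ∈ powI x (S.erase k) a := by
  have h1 : powI x S a = Ideal.span {x k ^ a k} ⊔ powI x (S.erase k) a := by
    unfold powI
    rw [← Ideal.span_union, ← Finset.insert_erase hk, Finset.coe_insert, Set.image_insert_eq,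
      Finset.erase_insert (Finset.notMem_erase k S), Set.insert_eq]
  rw [h1]
  constructor
  · intro h
    obtain ⟨y, hy, w, hw, rfl⟩ := Submodule.mem_sup.1 h
    obtain ⟨t, rfl⟩ := Ideal.mem_span_singleton'.1 hy
    exact ⟨t, by simpa using hw⟩
  · rintro ⟨t, ht⟩
    have : z = t * x k ^ a k + (z - t * x k ^ a k) := by ring
    rw [this]
    exact Submodule.add_mem_sup (Ideal.mem_span_singleton'.2 ⟨t, rfl⟩) ht

lemma powI_update (x : Fin p → R) (S : Finset (Fin p)) (a : Fin p → ℕ) (k : Fin p) (n : ℕ) :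
    powI x (S.erase k) (Function.update a k n) = powI x (S.erase k) a := by
  unfold powI
  congr 1
  apply Set.image_congr
  intro j hj
  have : j ≠ k := by
    rintro rfl
    simp at hj
  simp [Function.update_of_ne this]

lemma mem_powI_update (x : Fin p → R) (S : Finset (Fin p)) (a : Fin p → ℕ) (k : Fin p)
    (hk : k ∈ S) (n : ℕ) (z : R) :
    z ∈ powI x S (Function.update a k n) ↔ ∃ t, z - t * x k ^ n ∈ powI x (S.erase k) a := by
  rw [mem_powI_split x S _ k hk, powI_update]
  simp

lemma span_prime {x : Fin p → R} (hx : IsGRSOP x) (S : Set (Fin p)) :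
    (Ideal.span (x '' S)).IsPrime := by
  have := (hx.2 S).1
  exact (Ideal.Quotient.isDomain_iff_prime _).1 this

lemma range_prime {x : Fin p → R} (hx : IsGRSOP x) : (Ideal.span (Set.range x)).IsPrime := by
  have := span_prime hx Set.univ
  rwa [Set.image_univ] at this

lemma notMem_span {x : Fin p → R} (hx : IsGRSOP x) (S : Set (Fin p)) (i : Fin p) (hi : i ∉ S) :
    x i ∉ Ideal.span (x '' S) := by
  intro h
  have hp : 0 < p := i.pos
  set k : Fin p := ⟨p - 1, by omega⟩ with hk
  obtain ⟨h1, h2⟩ := hx.1 (Equiv.swap k i)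
  have h3 : Ideal.span (x '' S) ≤ Ideal.span ((x ∘ Equiv.swap k i) '' {j | j < k}) := by
    apply Ideal.span_mono
    rintro _ ⟨j, hj, rfl⟩
    refine ⟨Equiv.swap k i j, ?_, by simp⟩
    have hji : j ≠ i := by rintro rfl; exact hi hj
    have : Equiv.swap k i j ≠ k := by
      intro h
      apply hji
      have := congrArg (Equiv.swap k i) h
      simpa using this
    have h5 : (Equiv.swap k i j : ℕ) ≠ p - 1 := fun h => this (Fin.ext h)
    show Equiv.swap k i j < k
    rw [Fin.lt_def]
    have := (Equiv.swap k i j).2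
    show (Equiv.swap k i j : ℕ) < p - 1
    omega
  have h4 := h2 k 1 (by simpa using h3 h)
  apply h1
  rw [Ideal.eq_top_iff_one]
  exact Ideal.span_mono (Set.image_subset_range _ _) h4

lemma nzd_powI {x : Fin p → R} (hx : IsGRSOP x) : ∀ (N : ℕ) (S : Finset (Fin p)) (a : Fin p → ℕ),
    (∑ j ∈ S, a j) ≤ N → (∀ j ∈ S, 1 ≤ a j) → ∀ i ∉ S, ∀ r : R, r * x i ∈ powI x S a →
      r ∈ powI x S a := by
  intro N
  induction N with
  | zero =>
    intro S a hN ha i hi r hr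
    have hS : S = ∅ := by
      rw [Finset.eq_empty_iff_forall_notMem]
      intro j hj
      have := Finset.single_le_sum (f := a) (fun _ _ => Nat.zero_le _) hj
      have := ha j hj
      omega
    subst hS
    have hp := span_prime hx ∅
    have hn := notMem_span hx ∅ i (by simp)
    simp only [powI, Finset.coe_empty, Set.image_empty] at hr hp hn ⊢
    exact (hp.mem_or_mem hr).resolve_right hn
  | succ N ih =>
    intro S a hN ha i hi r hr
    by_cases hall : ∀ j ∈ S, a j = 1
    · have he : powI x S a = Ideal.span (x '' (S : Set (Fin p))) := by
        unfold powI
        congr 1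
        apply Set.image_congr
        intro j hj
        simp [hall j hj]
      rw [he] at hr ⊢
      exact ((span_prime hx _).mem_or_mem hr).resolve_right (notMem_span hx _ i (by simpa using hi))
    · push Not at hall
      obtain ⟨k, hk, hk1⟩ := hall
      obtain ⟨n, hn⟩ : ∃ n, a k = n + 2 := ⟨a k - 2, by have := ha k hk; omega⟩
      have hsum := Finset.add_sum_erase S a hk
      have hsumu : ∀ m, ∑ j ∈ S, Function.update a k m j = m + ∑ j ∈ S.erase k, a j := by
        intro m
        rw [← Finset.add_sum_erase S _ hk, Function.update_self]
        congr 1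
        apply Finset.sum_congr rfl
        intro j hj
        rw [Function.update_of_ne (Finset.ne_of_mem_erase hj)]
      have hau : ∀ m, 1 ≤ m → ∀ j ∈ S, 1 ≤ Function.update a k m j := by
        intro m hm j hj
        by_cases hjk : j = k
        · subst hjk; simpa using hm
        · rw [Function.update_of_ne hjk]; exact ha j hj
      have ih1 := ih S (Function.update a k 1) (by rw [hsumu]; omega) (hau 1 le_rfl) i hi
      have ih2 := ih S (Function.update a k (n+1)) (by rw [hsumu]; omega) (hau _ (by omega)) i hi
      have ih3 := ih (S.erase k) a (by omega) (fun j hj => ha j (Finset.mem_of_mem_erase hj)) k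
        (by simp)
      simp only [mem_powI_update x S a k hk] at ih1 ih2
      rw [mem_powI_split x S a k hk, hn] at hr ⊢
      obtain ⟨s, hs⟩ := hr
      obtain ⟨t, ht⟩ := ih1 r ⟨s * x k ^ (n+1), by convert hs using 1; ring⟩
      obtain ⟨t', ht'⟩ := ih2 t ⟨s, by
        apply ih3
        have := Ideal.sub_mem _ hs (Ideal.mul_mem_right (x i) _ ht)
        convert this using 1
        ring⟩
      refine ⟨t', ?_⟩
      have := Ideal.add_mem _ ht (Ideal.mul_mem_right (x k) _ ht')
      convert this using 1
      ring

/-- The ideal generated by the `x i ^ (e i + 1)`. -/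
def boxI (x : Fin p → R) (e : Fin p → ℕ) : Ideal R :=
  Ideal.span (Set.range fun i => x i ^ (e i + 1))

/-- The key property: the class of `x^e` modulo `boxI x e` has annihilator `(x)`. -/
def Key (x : Fin p → R) : Prop :=
  ∀ (e : Fin p → ℕ) (u : R), u * mono x e ∈ boxI x e → u ∈ Ideal.span (Set.range x)

lemma boxI_eq (x : Fin p → R) (e : Fin p → ℕ) :
    boxI x e = powI x Finset.univ (fun i => e i + 1) := by
  simp [boxI, powI]

lemma key_of_grsop {x : Fin p → R} (hx : IsGRSOP x) : Key x := by
  suffices h : ∀ (N : ℕ) (e : Fin p → ℕ), ∑ i, e i = N → ∀ u, u * mono x e ∈ boxI x e →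
      u ∈ Ideal.span (Set.range x) from fun e u => h _ e rfl u
  intro N
  induction N with
  | zero =>
    intro e he u hu
    have : ∀ i, e i = 0 := by simpa using he
    simpa [boxI, mono, this] using hu
  | succ N ih =>
    intro e he u hu
    obtain ⟨k, hk⟩ : ∃ k, e k ≠ 0 := by
      by_contra! h
      simp [h] at he
    obtain ⟨n, hn⟩ := Nat.exists_eq_succ_of_ne_zero hk
    set e' := Function.update e k n with he'
    have hsum : ∑ i, e' i = N := by
      have h1 := Finset.add_sum_erase Finset.univ e (Finset.mem_univ k)
      have h2 := Finset.add_sum_erase Finset.univ e' (Finset.mem_univ k)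
      have h3 : ∑ j ∈ Finset.univ.erase k, e' j = ∑ j ∈ Finset.univ.erase k, e j := by
        apply Finset.sum_congr rfl
        intro j hj
        rw [he', Function.update_of_ne (Finset.ne_of_mem_erase hj)]
      rw [h3] at h2
      have h4 : e' k = n := by simp [he']
      omega
    have hmono : mono x e = mono x e' * x k := by
      unfold mono
      rw [← Finset.mul_prod_erase Finset.univ _ (Finset.mem_univ k),
        ← Finset.mul_prod_erase Finset.univ (fun i => x i ^ e' i) (Finset.mem_univ k)]
      have h3 : ∏ j ∈ Finset.univ.erase k, x j ^ e' j = ∏ j ∈ Finset.univ.erase k, x j ^ e j := by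
        apply Finset.prod_congr rfl
        intro j hj
        rw [he', Function.update_of_ne (Finset.ne_of_mem_erase hj)]
      have h4 : e' k = n := by simp [he']
      rw [h3, h4, hn, Nat.succ_eq_add_one]
      ring
    apply ih e' hsum u
    have hfun : (fun i => e' i + 1) = Function.update (fun i => e i + 1) k (n + 1) := by
      funext j
      by_cases hj : j = k
      · subst hj; simp [he']
      · simp [he', Function.update_of_ne hj]
    rw [boxI_eq, mem_powI_split _ _ _ k (Finset.mem_univ k), hn] at hu
    rw [boxI_eq, hfun, mem_powI_update _ _ _ k (Finset.mem_univ k)]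
    obtain ⟨t, ht⟩ := hu
    refine ⟨t, ?_⟩
    apply nzd_powI hx _ _ _ le_rfl (fun j _ => Nat.le_add_left 1 _) k (by simp)
    convert ht using 1
    rw [hmono, Nat.succ_eq_add_one]
    ring

/-! ### Monomials -/

lemma mono_add (x : Fin p → R) (a b : Fin p → ℕ) : mono x (a + b) = mono x a * mono x b := by
  simp [mono, pow_add, Finset.prod_mul_distrib]

lemma mono_dvd (x : Fin p → R) {a b : Fin p → ℕ} (h : a ≤ b) : mono x a ∣ mono x b := by
  obtain ⟨c, rfl⟩ := exists_add_of_le h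
  exact ⟨mono x c, mono_add x a c⟩

lemma mono_mem_boxI (x : Fin p → R) {c e : Fin p → ℕ} (h : ¬ c ≤ e) : mono x c ∈ boxI x e := by
  simp only [Pi.le_def, not_forall, not_le] at h
  obtain ⟨i, hi⟩ := h
  have h1 : x i ^ (e i + 1) ∈ boxI x e := Ideal.subset_span ⟨i, rfl⟩
  refine Ideal.mem_of_dvd _ ?_ h1
  exact (pow_dvd_pow _ hi).trans (Finset.dvd_prod_of_mem (fun i => x i ^ c i) (Finset.mem_univ i))

lemma span_mono_le_boxI (x : Fin p → R) {C : Set (Fin p → ℕ)} {e : Fin p → ℕ}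
    (h : ∀ c ∈ C, ¬ c ≤ e) : Ideal.span (mono x '' C) ≤ boxI x e := by
  rw [Ideal.span_le]
  rintro _ ⟨c, hc, rfl⟩
  exact mono_mem_boxI x (h c hc)

lemma mul_mono_mem_boxI (x : Fin p → R) {u : R} (hu : u ∈ Ideal.span (Set.range x))
    (e : Fin p → ℕ) : u * mono x e ∈ boxI x e := by
  have : Ideal.span (Set.range x) ≤
      Submodule.comap (LinearMap.mulRight R (mono x e)) (boxI x e) := by
    refine Submodule.span_le.2 ?_
    rintro _ ⟨i, rfl⟩
    have h1 : x i ^ (e i + 1) ∈ boxI x e := Ideal.subset_span ⟨i, rfl⟩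
    show x i * mono x e ∈ boxI x e
    refine Ideal.mem_of_dvd _ ?_ h1
    rw [pow_succ']
    exact mul_dvd_mul_left _
      (Finset.dvd_prod_of_mem (fun i => x i ^ e i) (Finset.mem_univ i))
  exact this hu

lemma boxI_anti (x : Fin p → R) {a b : Fin p → ℕ} (h : a ≤ b) : boxI x b ≤ boxI x a := by
  refine Ideal.span_le.2 ?_
  rintro _ ⟨i, rfl⟩
  have h1 : x i ^ (a i + 1) ∈ boxI x a := Ideal.subset_span ⟨i, rfl⟩
  exact Ideal.mem_of_dvd _ (pow_dvd_pow _ (Nat.add_le_add_right (h i) 1)) h1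

lemma mem_span_mono (x : Fin p → R) {C : Set (Fin p → ℕ)} {z : R} :
    z ∈ Ideal.span (mono x '' C) ↔ ∃ t : Finset (Fin p → ℕ), ↑t ⊆ C ∧
      ∃ c : (Fin p → ℕ) → R, z = ∑ a ∈ t, c a * mono x a := by
  classical
  constructor
  · intro h
    obtain ⟨t, ht, c, hc⟩ := (Submodule.mem_span_image_iff_exists_fun R).1 h
    refine ⟨t, ht, fun a => if h : a ∈ t then c ⟨a, h⟩ else 0, ?_⟩
    rw [← hc, ← Finset.sum_coe_sort t]
    apply Finset.sum_congr rfl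
    rintro ⟨a, ha⟩ _
    simp [show a ∈ t from ha]
  · rintro ⟨t, ht, c, rfl⟩
    exact Ideal.sum_mem _ fun a ha =>
      Ideal.mul_mem_left _ _ (Ideal.subset_span ⟨a, ht ha, rfl⟩)

/-- If a sum of monomial terms lies in `boxI x e`, and `e` is the only exponent below `e`,
then the coefficient of `x^e` lies in `(x)`. -/
lemma Key.coeff_mem {x : Fin p → R} (hk : Key x) {ι : Type*} (t : Finset ι) (m : ι → Fin p → ℕ)
    (c : ι → R) (i : ι) (hi : i ∈ t) (h : ∀ j ∈ t, j ≠ i → ¬ m j ≤ m i)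
    (hs : ∑ j ∈ t, c j * mono x (m j) ∈ boxI x (m i)) : c i ∈ Ideal.span (Set.range x) := by
  classical
  apply hk (m i)
  rw [← Finset.add_sum_erase t _ hi] at hs
  refine (Ideal.add_mem_iff_left _ ?_).1 hs
  exact Ideal.sum_mem _ fun j hj => Ideal.mul_mem_left _ _
    (mono_mem_boxI x (h j (Finset.mem_of_mem_erase hj) (Finset.ne_of_mem_erase hj)))

lemma mono_mem_pow (x : Fin p → R) (a : Fin p → ℕ) :
    mono x a ∈ Ideal.span (Set.range x) ^ (∑ i, a i) := by
  rw [← Finset.prod_pow_eq_pow_sum]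
  exact Ideal.prod_mem_prod fun i _ =>
    Ideal.pow_mem_pow (Ideal.subset_span (Set.mem_range_self i)) _

lemma pow_le_span_mono (x : Fin p → R) (n : ℕ) :
    Ideal.span (Set.range x) ^ n ≤ Ideal.span (mono x '' {a | ∑ i, a i = n}) := by
  induction n with
  | zero =>
    have : (1 : R) ∈ Ideal.span (mono x '' {a | ∑ i, a i = 0}) :=
      Ideal.subset_span ⟨0, by simp, by simp [mono]⟩
    rw [(Ideal.eq_top_iff_one _).2 this]
    exact le_top
  | succ n ih =>
    rw [pow_succ]
    refine (Ideal.mul_mono_left ih).trans ?_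
    rw [Ideal.span_mul_span', Ideal.span_le]
    rintro _ ⟨_, ⟨a, ha, rfl⟩, _, ⟨i, rfl⟩, rfl⟩
    refine Ideal.subset_span ⟨a + Pi.single i 1, ?_, ?_⟩
    · have ha' : ∑ i, a i = n := ha
      simp [Finset.sum_add_distrib, ha']
    · rw [mono_add]
      congr 1
      unfold mono
      rw [Finset.prod_eq_single i]
      · simp
      · intro j _ hj; simp [hj]
      · simp

/-! ### Existence of monomial representations in the local case -/

lemma exists_rep_local {L : Type*} [CommRing L] [IsLocalRing L] [IsNoetherianRing L]
    (x : Fin p → L) (hm : Ideal.span (Set.range x) = IsLocalRing.maximalIdeal L) (hk : Key x)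
    (f : L) : ∃ (A : Finset (Fin p → ℕ)) (r : (Fin p → ℕ) → L),
      (∀ a ∈ A, ∀ b ∈ A, a ≤ b → a = b) ∧ (∀ a ∈ A, IsUnit (r a)) ∧
      f = ∑ a ∈ A, r a * mono x a := by
  classical
  set m := Ideal.span (Set.range x) with hmdef
  set U : Set (Fin p → ℕ) := {a | f ∉ boxI x a} with hU
  set W := Ideal.span (mono x '' U) with hW
  have hup : ∀ a ∈ U, ∀ b, a ≤ b → b ∈ U := fun a ha b hab h => ha (boxI_anti x hab h)
  have hstep : ∀ n, f ∈ W ⊔ m ^ n := by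
    intro n
    induction n with
    | zero => simp
    | succ n ih =>
      obtain ⟨g, hg, s, hs, hgs⟩ := Submodule.mem_sup.1 ih
      obtain ⟨t, ht, c, hc⟩ := (mem_span_mono x).1 (pow_le_span_mono x n hs)
      rw [← hgs]
      refine Ideal.add_mem _ (Ideal.mem_sup_left hg) ?_
      have hs' := hs
      rw [hc]
      refine Ideal.sum_mem _ fun a ha => ?_
      by_cases haU : a ∈ U
      · exact Ideal.mem_sup_left (Ideal.mul_mem_left _ _ (Ideal.subset_span ⟨a, haU, rfl⟩))
      · apply Ideal.mem_sup_right
        have hfa : f ∈ boxI x a := by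
          by_contra h
          exact haU h
        have hga : g ∈ boxI x a :=
          span_mono_le_boxI x (fun c hc hca => haU (hup c hc a hca)) hg
        have hsa : s ∈ boxI x a := by
          rw [← hgs] at hfa
          exact (Ideal.add_mem_iff_right _ hga).1 hfa
        have hca : c a ∈ m := by
          rw [hc] at hsa
          refine hk.coeff_mem t id c a ha ?_ hsa
          intro j hj hja hle
          apply hja
          have h1 : ∑ i, j i = n := ht hj
          have h2 : ∑ i, a i = n := ht ha
          funext i
          exact (Finset.sum_eq_sum_iff_of_le (fun i _ => hle i)).1 (h1.trans h2.symm) i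
            (Finset.mem_univ i)
        have h2 : ∑ i, a i = n := ht ha
        have := mono_mem_pow x a
        rw [h2] at this
        rw [pow_succ']
        exact Ideal.mul_mem_mul hca this
  have hfW : f ∈ W := by
    have hkr := Ideal.iInf_pow_smul_eq_bot_of_isLocalRing (M := L ⧸ W) m
      (by rw [hm]; exact Ideal.IsPrime.ne_top')
    have : (Ideal.Quotient.mk W f : L ⧸ W) ∈ (⨅ i : ℕ, m ^ i • ⊤ : Submodule L (L ⧸ W)) := by
      rw [Submodule.mem_iInf]
      intro n
      obtain ⟨g, hg, s, hs, hgs⟩ := Submodule.mem_sup.1 (hstep n)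
      have : Ideal.Quotient.mk W f = s • (1 : L ⧸ W) := by
        rw [← hgs, map_add, Ideal.Quotient.eq_zero_iff_mem.2 hg, zero_add, Algebra.smul_def,
          mul_one]
        rfl
      rw [this]
      exact Submodule.smul_mem_smul hs trivial
    rw [hkr] at this
    exact Ideal.Quotient.eq_zero_iff_mem.1 this
  have hfin : {a | Minimal (· ∈ U) a}.Finite :=
    (setOfPred_minimal_antichain _).finite_of_partiallyWellOrderedOn
      (Set.isPWO_of_wellQuasiOrderedLE _)
  set A := hfin.toFinset with hA
  have hAm : ∀ a, a ∈ A ↔ Minimal (· ∈ U) a := by simp [hA]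
  have hWA : W ≤ Ideal.span (mono x '' (A : Set (Fin p → ℕ))) := by
    rw [hW, Ideal.span_le]
    rintro _ ⟨c, hc, rfl⟩
    obtain ⟨b, hb, hbm⟩ := exists_minimal_le_of_wellFoundedLT (· ∈ U) c hc
    exact Ideal.mem_of_dvd _ (mono_dvd x hb) (Ideal.subset_span ⟨b, (hAm b).2 hbm, rfl⟩)
  obtain ⟨t, ht, c, hc⟩ := (mem_span_mono x).1 (hWA hfW)
  have hanti : ∀ a ∈ A, ∀ b ∈ A, a ≤ b → a = b := by
    intro a ha b hb hab
    exact le_antisymm hab (((hAm b).1 hb).2 ((hAm a).1 ha).1 hab)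
  have hc' : f = ∑ a ∈ A, (if a ∈ t then c a else 0) * mono x a := by
    rw [hc, ← Finset.sum_subset (show t ⊆ A from fun a ha => ht ha)]
    · exact Finset.sum_congr rfl fun a ha => by simp [ha]
    · intro a _ ha; simp [ha]
  refine ⟨A, fun a => if a ∈ t then c a else 0, hanti, ?_, hc'⟩
  intro a ha
  by_contra hu
  have hcm : (if a ∈ t then c a else 0) ∈ m := by
    rw [hm, IsLocalRing.mem_maximalIdeal]
    exact hu
  apply ((hAm a).1 ha).1
  rw [hc']
  refine Ideal.sum_mem _ fun b hb => ?_
  by_cases hba : b = a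
  · rw [hba]; exact mul_mono_mem_boxI x hcm a
  · exact Ideal.mul_mem_left _ _ (mono_mem_boxI x fun hle => hba (hanti b hb a ha hle))

lemma map_mono {L : Type*} [CommRing L] (φ : R →+* L) (x : Fin p → R) (a : Fin p → ℕ) :
    φ (mono x a) = mono (φ ∘ x) a := by
  simp [mono]

lemma map_boxI {L : Type*} [CommRing L] (φ : R →+* L) (x : Fin p → R) (a : Fin p → ℕ) :
    (boxI x a).map φ = boxI (φ ∘ x) a := by
  unfold boxI
  rw [Ideal.map_span, ← Set.range_comp]
  congr 2
  funext i
  simp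

lemma map_range {L : Type*} [CommRing L] (φ : R →+* L) (x : Fin p → R) :
    (Ideal.span (Set.range x)).map φ = Ideal.span (Set.range (φ ∘ x)) := by
  rw [Ideal.map_span, ← Set.range_comp]

lemma key_localization [IsDomain R] (x : Fin p → R) (hk : Key x)
    [hQ : (Ideal.span (Set.range x)).IsPrime] :
    Key (algebraMap R (Localization.AtPrime (Ideal.span (Set.range x))) ∘ x) := by
  set Q := Ideal.span (Set.range x) with hQd
  intro e u hu
  rw [← map_boxI, ← map_mono] at hu
  obtain ⟨r, s, rfl⟩ := IsLocalization.exists_mk'_eq Q.primeCompl u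
  obtain ⟨⟨⟨y, hy⟩, t⟩, ht⟩ := (IsLocalization.mem_map_algebraMap_iff Q.primeCompl _).1 hu
  simp only at ht
  have h1 : algebraMap R (Localization.AtPrime Q) (r * mono x e * t) =
      algebraMap R (Localization.AtPrime Q) (y * s) := by
    rw [map_mul, map_mul, map_mul _ y, ← ht, ← IsLocalization.mk'_spec (Localization.AtPrime Q) r s]
    ring
  have h2 := IsLocalization.injective (Localization.AtPrime Q) Q.primeCompl_le_nonZeroDivisors h1
  have h3 : r * t ∈ Q := by
    apply hk e
    have : r * t * mono x e = y * s := by rw [← h2]; ring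
    rw [this]
    exact Ideal.mul_mem_right _ _ hy
  have h4 : r ∈ Q := (hQ.mem_or_mem h3).resolve_right t.2
  rw [← map_range]
  rw [IsLocalization.mk'_eq_mul_mk'_one]
  exact Ideal.mul_mem_right _ _ (Ideal.mem_map_of_mem _ h4)

lemma exists_rep {x : Fin p → R} (hR : IsRegularDomain R) (hx : IsGRSOP x) (f : R) :
    ∃ A : Finset (Fin p → ℕ), IsMonRep x f A ∧ ∀ a ∈ A, ∀ b ∈ A, a ≤ b → a = b := by
  have hdom := hR.1
  have hQ := range_prime hx
  have hk := key_localization x (key_of_grsop hx)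
  set Q := Ideal.span (Set.range x) with hQd
  have hN : IsNoetherianRing (Localization.AtPrime Q) := (hR.2 Q hQ).1
  set L := Localization.AtPrime Q with hL
  obtain ⟨A, r, hA, hr, hf⟩ := exists_rep_local (algebraMap R L ∘ x)
    (by rw [← map_range]; exact Localization.AtPrime.map_eq_maximalIdeal) hk (algebraMap R L f)
  refine ⟨A, ?_, hA⟩
  obtain ⟨b, hb⟩ := IsLocalization.exist_integer_multiples Q.primeCompl A r
  have hb' : ∀ a, ∃ r' : R, a ∈ A → algebraMap R L r' = algebraMap R L b * r a := by
    intro a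
    by_cases ha : a ∈ A
    · obtain ⟨r', hr'⟩ := hb a ha
      exact ⟨r', fun _ => by rw [hr', Algebra.smul_def]⟩
    · exact ⟨0, fun h => absurd h ha⟩
  choose r' hr' using hb'
  refine ⟨b, r', b.2, ?_, ?_⟩
  · intro a ha hmem
    have h1 := (IsLocalization.AtPrime.to_map_mem_maximal_iff L Q (r' a)).2 hmem
    rw [hr' a ha, IsLocalRing.mem_maximalIdeal] at h1
    exact h1 ((IsLocalization.map_units L b).mul (hr a ha))
  · apply IsLocalization.injective L Q.primeCompl_le_nonZeroDivisors
    rw [map_mul, hf, map_sum, Finset.mul_sum]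
    refine Finset.sum_congr rfl fun a ha => ?_
    rw [map_mul, hr' a ha, map_mono, mul_assoc]

lemma mono_dvd_iff {x : Fin p → R} (hx : IsGRSOP x) {a b : Fin p → ℕ} :
    mono x a ∣ mono x b ↔ a ≤ b := by
  refine ⟨fun h => ?_, mono_dvd x⟩
  by_contra hab
  have h1 := Ideal.mem_of_dvd _ h (mono_mem_boxI x hab)
  have h2 := key_of_grsop hx b 1 (by simpa using h1)
  exact (range_prime hx).ne_top ((Ideal.eq_top_iff_one _).2 h2)

lemma isMinMonRep_iff {x : Fin p → R} (hx : IsGRSOP x) (f : R) (A : Finset (Fin p → ℕ)) :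
    IsMinMonRep x f A ↔ IsMonRep x f A ∧ ∀ a ∈ A, ∀ b ∈ A, a ≤ b → a = b := by
  unfold IsMinMonRep
  simp only [mono_dvd_iff hx]
  refine and_congr_right fun _ => ⟨fun h a ha b hb hab => ?_, fun h a ha b hb hab hle => ?_⟩
  · by_contra hne
    exact h a ha b hb hne hab
  · exact hab (h a ha b hb hle)

lemma rep_compare {x : Fin p → R} (hx : IsGRSOP x) {f h : R} {C : Set (Fin p → ℕ)}
    (hh : h ∉ Ideal.span (Set.range x)) (hf : h * f ∈ Ideal.span (mono x '' C))
    {B : Finset (Fin p → ℕ)} (hB : IsMinMonRep x f B) : ∀ b ∈ B, ∃ c ∈ C, c ≤ b := by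
  intro b hb
  by_contra! hcon
  obtain ⟨⟨h', s, hh', hs, he⟩, hB2⟩ := (isMinMonRep_iff hx f B).1 hB
  have h1 : h * f ∈ boxI x b := span_mono_le_boxI x hcon hf
  have h2 : ∑ a ∈ B, (h * s a) * mono x a ∈ boxI x b := by
    have : ∑ a ∈ B, (h * s a) * mono x a = h' * (h * f) := by
      rw [mul_left_comm, he, Finset.mul_sum]
      exact Finset.sum_congr rfl fun a _ => by ring
    rw [this]
    exact Ideal.mul_mem_left _ _ h1
  have h3 := (key_of_grsop hx).coeff_mem B id (fun a => h * s a) b hb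
    (fun j hj hjb hle => hjb (hB2 j hj b hb hle)) h2
  rcases (range_prime hx).mem_or_mem h3 with h4 | h4
  · exact hh h4
  · exact hs b hb h4

lemma IsMonRep.mem_span {x : Fin p → R} {f : R} {A : Finset (Fin p → ℕ)} (hA : IsMonRep x f A) :
    ∃ h ∉ Ideal.span (Set.range x), h * f ∈ Ideal.span (mono x '' (A : Set (Fin p → ℕ))) := by
  obtain ⟨h, r, hh, _, he⟩ := hA
  exact ⟨h, hh, (mem_span_mono x).2 ⟨A, subset_rfl, r, he⟩⟩

lemma rep_unique {x : Fin p → R} (hx : IsGRSOP x) {f : R} {A B : Finset (Fin p → ℕ)}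
    (hA : IsMinMonRep x f A) (hB : IsMinMonRep x f B) : A ⊆ B := by
  intro a ha
  obtain ⟨h, hh, hs⟩ := hA.1.mem_span
  obtain ⟨h', hh', hs'⟩ := hB.1.mem_span
  obtain ⟨b, hb, hba⟩ := rep_compare hx hh' hs' hA a ha
  obtain ⟨a', ha', hab⟩ := rep_compare hx hh hs hB b hb
  have := ((isMinMonRep_iff hx f A).1 hA).2 a' ha' a ha (hab.trans hba)
  subst this
  rwa [le_antisymm hab hba]

lemma supp_eq {x : Fin p → R} (hx : IsGRSOP x) {f : R} {A : Finset (Fin p → ℕ)}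
    (hA : IsMinMonRep x f A) : supp x f = A := by
  have h : ∃ A : Finset (Fin p → ℕ), IsMinMonRep x f A := ⟨A, hA⟩
  rw [supp, dif_pos h]
  exact Finset.coe_inj.2 (Finset.Subset.antisymm (rep_unique hx h.choose_spec hA)
    (rep_unique hx hA h.choose_spec))

lemma exists_minRep {x : Fin p → R} (hR : IsRegularDomain R) (hx : IsGRSOP x) (f : R) :
    ∃ A : Finset (Fin p → ℕ), IsMinMonRep x f A := by
  obtain ⟨A, hA⟩ := exists_rep hR hx f
  exact ⟨A, (isMinMonRep_iff hx f A).2 hA⟩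

/-- The upward closure of a finite set of exponents. -/
def Up (A : Finset (Fin p → ℕ)) : Set (Fin p → ℕ) := {c | ∃ a ∈ A, a ≤ c}

lemma ΓE_eq {x : Fin p → R} (hR : IsRegularDomain R) (hx : IsGRSOP x) {f : R}
    {A : Finset (Fin p → ℕ)} (hA : IsMinMonRep x f A) :
    ΓE x f = convexHull ℝ (toR '' Up A) := by
  unfold ΓE ΓI Γ
  congr 2
  apply Set.Subset.antisymm
  · intro c hc
    simp only [Set.mem_iUnion] at hc
    obtain ⟨g, hg, hc⟩ := hc
    obtain ⟨t, rfl⟩ := Ideal.mem_span_singleton'.1 hg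
    obtain ⟨B, hB⟩ := exists_minRep hR hx (t * f)
    rw [supp_eq hx hB] at hc
    obtain ⟨h, hh, hs⟩ := hA.1.mem_span
    exact rep_compare hx hh (by rw [mul_left_comm]; exact Ideal.mul_mem_left _ _ hs) hB c hc
  · rintro c ⟨a, ha, hac⟩
    obtain ⟨d, rfl⟩ := exists_add_of_le hac
    simp only [Set.mem_iUnion]
    refine ⟨mono x d * f, Ideal.mem_span_singleton'.2 ⟨_, rfl⟩, ?_⟩
    have hB : IsMinMonRep x (mono x d * f) (A.map (addRightEmbedding d)) := by
      rw [isMinMonRep_iff hx] at hA ⊢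
      obtain ⟨⟨h, r, hh, hr, he⟩, hA2⟩ := hA
      refine ⟨⟨h, fun a => r (a - d), hh, ?_, ?_⟩, ?_⟩
      · intro a ha
        obtain ⟨a, haA, rfl⟩ := Finset.mem_map.1 ha
        simpa using hr a haA
      · rw [mul_left_comm, he, Finset.mul_sum, Finset.sum_map]
        refine Finset.sum_congr rfl fun a _ => ?_
        simp only [addRightEmbedding_apply, add_tsub_cancel_right, mono_add]
        ring
      · intro a ha b hb hab
        obtain ⟨a, haA, rfl⟩ := Finset.mem_map.1 ha
        obtain ⟨b, hbB, rfl⟩ := Finset.mem_map.1 hb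
        simp only [addRightEmbedding_apply, add_le_add_iff_right] at hab ⊢
        rw [hA2 a haA b hbB hab]
    rw [supp_eq hx hB]
    simp only [Finset.coe_map, addRightEmbedding_apply, Set.mem_image, Finset.mem_coe]
    exact ⟨a, ha, rfl⟩

/-! ### Convexity -/

lemma toR_add (a b : Fin p → ℕ) : toR (a + b) = toR a + toR b := by
  funext i; simp [toR]

lemma convexHull_nat : convexHull ℝ (Set.range ((↑) : ℕ → ℝ)) = Set.Ici 0 := by
  apply Set.Subset.antisymm
  · refine convexHull_min ?_ (convex_Ici 0)
    rintro _ ⟨n, rfl⟩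
    simp
  · intro t ht
    obtain ⟨n, hn⟩ := exists_nat_ge t
    have h0 : ((0 : ℕ) : ℝ) ∈ convexHull ℝ (Set.range ((↑) : ℕ → ℝ)) :=
      subset_convexHull _ _ ⟨0, rfl⟩
    have h1 : (n : ℝ) ∈ convexHull ℝ (Set.range ((↑) : ℕ → ℝ)) :=
      subset_convexHull _ _ ⟨n, rfl⟩
    refine (convex_convexHull ℝ _).segment_subset h0 h1 ?_
    rw [Nat.cast_zero, segment_eq_Icc n.cast_nonneg]
    exact ⟨ht, hn⟩

lemma convexHull_toR_univ :
    convexHull ℝ (toR '' (Set.univ : Set (Fin p → ℕ))) = Set.univ.pi fun _ => Set.Ici 0 := by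
  have : toR '' (Set.univ : Set (Fin p → ℕ)) =
      Set.univ.pi fun _ : Fin p => Set.range ((↑) : ℕ → ℝ) := by
    ext y
    constructor
    · rintro ⟨a, _, rfl⟩ i _
      exact ⟨a i, rfl⟩
    · intro hy
      choose a ha using fun i => hy i trivial
      exact ⟨a, trivial, funext ha⟩
  rw [this, convexHull_pi, convexHull_nat]

lemma isClosed_hull (A : Finset (Fin p → ℕ)) : IsClosed (convexHull ℝ (toR '' Up A)) := by
  have : toR '' Up A = toR '' (A : Set (Fin p → ℕ)) + toR '' (Set.univ : Set (Fin p → ℕ)) := by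
    ext y
    constructor
    · rintro ⟨c, ⟨a, ha, hac⟩, rfl⟩
      obtain ⟨d, rfl⟩ := exists_add_of_le hac
      exact ⟨toR a, ⟨a, ha, rfl⟩, toR d, ⟨d, trivial, rfl⟩, (toR_add a d).symm⟩
    · rintro ⟨_, ⟨a, ha, rfl⟩, _, ⟨d, _, rfl⟩, rfl⟩
      exact ⟨a + d, ⟨a, ha, le_self_add⟩, toR_add a d⟩
  rw [this, convexHull_add, convexHull_toR_univ]
  exact (isClosed_set_pi fun _ _ => isClosed_Ici).add_left_of_isCompact
    ((A.finite_toSet.image toR).isCompact_convexHull ℝ)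

lemma sum_mem_hull {x : Fin p → R} (hdom : IsDomain R) (hx : IsGRSOP x) {g h : R}
    {A B C : Finset (Fin p → ℕ)} (hA : IsMinMonRep x g A) (hB : IsMinMonRep x h B)
    (hC : IsMinMonRep x (g * h) C) {a b : Fin p → ℕ} (ha : a ∈ A) (hb : b ∈ B) :
    toR (a + b) ∈ convexHull ℝ (toR '' Up C) := by
  classical
  by_contra hcon
  obtain ⟨φ, u, hu, hφ⟩ := geometric_hahn_banach_point_closed (convex_convexHull ℝ _)
    (isClosed_hull C) hcon
  replace hφ : ∀ c ∈ Up C, u < φ (toR c) := fun c hc => hφ _ (subset_convexHull _ _ ⟨c, hc, rfl⟩)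
  obtain ⟨hA1, hA2⟩ := hA
  obtain ⟨hB1, hB2⟩ := hB
  have hAm := (isMinMonRep_iff hx g A).1 ⟨hA1, hA2⟩
  have hBm := (isMinMonRep_iff hx h B).1 ⟨hB1, hB2⟩
  obtain ⟨g', r, hg', hr, hge⟩ := hA1
  obtain ⟨h', s, hh', hs, hhe⟩ := hB1
  obtain ⟨k', hk', hke⟩ := hC.1.mem_span
  have hprime := range_prime hx
  have hkey := key_of_grsop hx
  -- `C` is nonempty
  have hCne : C.Nonempty := by
    rw [Finset.nonempty_iff_ne_empty]
    rintro rfl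
    simp only [Finset.coe_empty, Set.image_empty, Ideal.span_empty, Ideal.mem_bot,
      mul_eq_zero] at hke
    rcases hke with rfl | rfl | rfl
    · exact hk' (Ideal.zero_mem _)
    · obtain ⟨c, hc, _⟩ := rep_compare hx (C := ∅) hg' (by simp) ⟨⟨g', r, hg', hr, hge⟩, hA2⟩ a ha
      exact hc
    · obtain ⟨c, hc, _⟩ := rep_compare hx (C := ∅) hh' (by simp) ⟨⟨h', s, hh', hs, hhe⟩, hB2⟩ b hb
      exact hc
  obtain ⟨c0, hc0⟩ := hCne
  -- the functional is nonnegative on the orthant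
  have hnonneg : ∀ d : Fin p → ℕ, 0 ≤ φ (toR d) := by
    intro d
    by_contra! hd
    obtain ⟨n, hn⟩ := Archimedean.arch (φ (toR c0) - u) (neg_pos.2 hd)
    have h1 := hφ (c0 + n • d) ⟨c0, hc0, le_self_add⟩
    have h2 : toR (n • d) = (n : ℝ) • toR d := by
      funext i; simp [toR]
    rw [toR_add, h2, map_add, map_smul] at h1
    simp only [nsmul_eq_mul, smul_eq_mul] at hn h1
    linarith
  -- the total order on exponents
  let κ : (Fin p → ℕ) → ℝ ×ₗ Lex (Fin p → ℕ) := fun c => toLex (φ (toR c), toLex c)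
  have κadd : ∀ c d, κ (c + d) = κ c + κ d := by
    intro c d
    simp only [κ, toR_add, map_add]
    rfl
  have κinj : Function.Injective κ := by
    intro c d hcd
    have := congrArg (fun z => ofLex (ofLex z).2) hcd
    simpa [κ] using this
  have κmono : Monotone κ := by
    intro c d hcd
    obtain ⟨e, rfl⟩ := exists_add_of_le hcd
    apply Prod.Lex.toLex_mono
    refine Prod.mk_le_mk.2 ⟨?_, Pi.toLex_monotone hcd⟩
    rw [toR_add, map_add]
    linarith [hnonneg e]
  have κfst : ∀ c d, κ c ≤ κ d → φ (toR c) ≤ φ (toR d) := by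
    intro c d hcd
    rcases (Prod.Lex.le_iff).1 hcd with h1 | h1
    · exact le_of_lt h1
    · exact le_of_eq h1.1
  obtain ⟨a1, ha1, hmin1⟩ := A.exists_min_image κ ⟨a, ha⟩
  obtain ⟨b1, hb1, hmin2⟩ := B.exists_min_image κ ⟨b, hb⟩
  have hlt : φ (toR (a1 + b1)) < u := by
    refine lt_of_le_of_lt ?_ hu
    rw [toR_add, toR_add, map_add, map_add]
    exact add_le_add (κfst _ _ (hmin1 a ha)) (κfst _ _ (hmin2 b hb))
  have hbox : k' * (g * h) ∈ boxI x (a1 + b1) := by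
    refine span_mono_le_boxI x (fun c hc hle => ?_) hke
    have h1 := hφ c ⟨c, hc, le_rfl⟩
    have h2 := κfst _ _ (κmono hle)
    linarith
  have hexp : ∑ q ∈ A ×ˢ B, (k' * (r q.1 * s q.2)) * mono x (q.1 + q.2) =
      (g' * h') * (k' * (g * h)) := by
    have : (g' * h') * (k' * (g * h)) = k' * ((g' * g) * (h' * h)) := by ring
    rw [this, hge, hhe, Finset.sum_mul_sum, ← Finset.sum_product', Finset.mul_sum]
    refine Finset.sum_congr rfl fun q _ => ?_
    rw [mono_add]
    ring
  have hmem := hkey.coeff_mem (A ×ˢ B) (fun q => q.1 + q.2) (fun q => k' * (r q.1 * s q.2))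
    (a1, b1) (Finset.mem_product.2 ⟨ha1, hb1⟩) (by
      rintro ⟨a2, b2⟩ hq hne hle
      obtain ⟨ha2, hb2⟩ := Finset.mem_product.1 hq
      have h1 := κmono hle
      simp only [κadd] at h1
      have h2 := hmin1 a2 ha2
      have h3 := hmin2 b2 hb2
      have h4 : κ a1 = κ a2 := by
        refine le_antisymm h2 ?_
        by_contra! hlt'
        exact absurd h1 (not_le.2 (add_lt_add_of_lt_of_le hlt' h3))
      have h5 : κ b1 = κ b2 := by
        refine le_antisymm h3 ?_
        by_contra! hlt'
        exact absurd h1 (not_le.2 (add_lt_add_of_le_of_lt h2 hlt'))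
      exact hne (by rw [κinj h4, κinj h5])) (by
      rw [hexp]
      exact Ideal.mul_mem_left _ _ hbox)
  rcases hprime.mem_or_mem hmem with h1 | h1
  · exact hk' h1
  · rcases hprime.mem_or_mem h1 with h2 | h2
    · exact hr a1 ha1 h2
    · exact hs b1 hb1 h2

/-- `Γ_x(gh) = Γ_x(g) + Γ_x(h)`, Minkowski sum. -/
theorem newtonPolyhedron_mul {R : Type*} [CommRing R] {p : ℕ}
    (x : Fin p → R) (hR : IsRegularDomain R) (hx : IsGRSOP x) (g h : R) :
    ΓE x (g * h) = ΓE x g + ΓE x h := by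
  obtain ⟨A, hA⟩ := exists_minRep hR hx g
  obtain ⟨B, hB⟩ := exists_minRep hR hx h
  obtain ⟨C, hC⟩ := exists_minRep hR hx (g * h)
  rw [ΓE_eq hR hx hA, ΓE_eq hR hx hB, ΓE_eq hR hx hC, ← convexHull_add]
  apply Set.Subset.antisymm
  · apply convexHull_mono
    rintro _ ⟨c, ⟨c', hc', hcc⟩, rfl⟩
    obtain ⟨g', r, hg', hr, hge⟩ := hA.1
    obtain ⟨h', s, hh', hs, hhe⟩ := hB.1
    have hgh : g' * h' ∉ Ideal.span (Set.range x) := fun hm =>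
      ((range_prime hx).mem_or_mem hm).elim hg' hh'
    have hmem : (g' * h') * (g * h) ∈ Ideal.span
        (mono x '' {e | ∃ a ∈ A, ∃ b ∈ B, a + b = e}) := by
      have : (g' * h') * (g * h) = (g' * g) * (h' * h) := by ring
      rw [this, hge, hhe, Finset.sum_mul_sum]
      refine Ideal.sum_mem _ fun a ha => Ideal.sum_mem _ fun b hb => ?_
      have : r a * mono x a * (s b * mono x b) = (r a * s b) * mono x (a + b) := by
        rw [mono_add]
        ring
      rw [this]
      exact Ideal.mul_mem_left _ _ (Ideal.subset_span ⟨a + b, ⟨a, ha, b, hb, rfl⟩, rfl⟩)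
    obtain ⟨_, ⟨a, ha, b, hb, rfl⟩, hle⟩ := rep_compare hx hgh hmem hC c' hc'
    obtain ⟨d, rfl⟩ := exists_add_of_le (hle.trans hcc)
    refine ⟨toR a, ⟨a, ⟨a, ha, le_rfl⟩, rfl⟩, toR (b + d), ⟨b + d, ⟨b, hb, le_self_add⟩, rfl⟩, ?_⟩
    show toR a + toR (b + d) = _
    rw [← toR_add, add_assoc]
  · refine convexHull_min ?_ (convex_convexHull ℝ _)
    rintro _ ⟨_, ⟨a', ⟨a, ha, haa⟩, rfl⟩, _, ⟨b', ⟨b, hb, hbb⟩, rfl⟩, rfl⟩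
    obtain ⟨d, rfl⟩ := exists_add_of_le haa
    obtain ⟨e, rfl⟩ := exists_add_of_le hbb
    have h1 := sum_mem_hull hR.1 hx hA hB hC ha hb
    have h2 : toR (d + e) +ᵥ convexHull ℝ (toR '' Up C) ⊆ convexHull ℝ (toR '' Up C) := by
      rw [← convexHull_vadd]
      apply convexHull_mono
      rintro _ ⟨_, ⟨c, ⟨c', hc', hcc⟩, rfl⟩, rfl⟩
      refine ⟨d + e + c, ⟨c', hc', hcc.trans le_add_self⟩, toR_add _ _⟩
    have h3 := h2 (Set.vadd_mem_vadd_set h1)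
    convert h3 using 1
    show toR (a + d) + toR (b + e) = toR (d + e) + toR (a + b)
    simp only [toR_add]
    abel


end NND
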